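/- arXiv:2003.11152 — 5 statements merged into one kernel-verified Lean document; each statement's English description precedes it below -/
import Mathlib

section
/- Let S₁,…,S_d be pairwise commuting N×N complex matrices with joint spectrum Λ = {λ_1,…,λ_N} (relative to a simultaneous unitary upper-triangularization), let h be a multivariate polynomial with h(λ_i) ≠ 0 for all i, and let g be a multivariate polynomial satisfying g(λ_i) h(λ_i) = 1 for every 1 ≤ i ≤ N. Set H = h(S₁,…,S_d) and G = g(S₁,…,S_d). Then (I − H G)^N = 0; consequently, for every b ∈ ℂ^N the iterates of the iterative approximation algorithm satisfy x⁽ᵐ⁾ = H⁻¹ b for all m ≥ N, i.e., the algorithm converges in at most N steps. -/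
open Matrix

/-- The polynomial graph filter `h(S₁,…,S_d) = ∑ h_{l₁,…,l_d} S₁^{l₁}⋯S_d^{l_d}` associated with
a multivariate polynomial `h` and matrices `S₁,…,S_d`. -/
noncomputable def polyFilter {N d : ℕ} (S : Fin d → Matrix (Fin N) (Fin N) ℂ)
    (h : MvPolynomial (Fin d) ℂ) : Matrix (Fin N) (Fin N) ℂ :=
  ∑ m ∈ h.support, h.coeff m • (List.ofFn fun k => S k ^ m k).prod

/-!
Conjugation by `U` is an algebra automorphism, and on upper triangular matrices each diagonal entry
is an algebra homomorphism to the scalars. Both commute with evaluation of polynomials, so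
`U (1 - H G) U⁻¹` is upper triangular with diagonal entries `1 - h(λᵢ) g(λᵢ) = 0`, and its `N`-th
power vanishes by Cayley–Hamilton. Since `(1 - H G) ^ k` maps `b` to the residual `b - H x⁽ᵏ⁾`,
the residual is zero from step `N` on.
-/

section OrderedEval

variable {R A B : Type*} [CommSemiring R] [Semiring A] [Algebra R A] [Semiring B] [Algebra R B]
  {d : ℕ}

/-- Evaluation of a polynomial at a tuple `s` of elements of an algebra, which need not commute:
the factors of each monomial are multiplied in the order of their indices. For complex matrices
this is `polyFilter`. -/
noncomputable def orderedEval (s : Fin d → A) (p : MvPolynomial (Fin d) R) : A :=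
  ∑ m ∈ p.support, p.coeff m • (List.ofFn fun k => s k ^ m k).prod

lemma map_orderedEval (φ : A →ₐ[R] B) (s : Fin d → A) (p : MvPolynomial (Fin d) R) :
    φ (orderedEval s p) = orderedEval (φ ∘ s) p := by
  simp only [orderedEval, map_sum, map_smul, map_list_prod, List.map_ofFn, Function.comp_def,
    map_pow]

lemma orderedEval_eq_eval (s : Fin d → R) (p : MvPolynomial (Fin d) R) :
    orderedEval s p = MvPolynomial.eval s p := by
  simp only [orderedEval, List.prod_ofFn, smul_eq_mul, MvPolynomial.eval_eq']

lemma orderedEval_mem {T : Subalgebra R A} {s : Fin d → A} (hs : ∀ k, s k ∈ T)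
    (p : MvPolynomial (Fin d) R) : orderedEval s p ∈ T := by
  have hval : T.val (orderedEval (fun k => ⟨s k, hs k⟩) p) = orderedEval s p :=
    map_orderedEval T.val _ p
  exact hval ▸ Subtype.property _

end OrderedEval

section UpperTriangular

variable {R n : Type*} [Fintype n] [LinearOrder n] {d : ℕ}

lemma mul_apply_self_of_isUpperTriangular [NonUnitalNonAssocSemiring R] {A B : Matrix n n R}
    (hA : A.IsUpperTriangular) (hB : B.IsUpperTriangular) (i : n) :
    (A * B) i i = A i i * B i i := by
  rw [Matrix.mul_apply]
  refine Finset.sum_eq_single i (fun j _ hj => ?_) (by simp)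
  rcases lt_or_gt_of_ne hj with hlt | hgt
  · rw [hA hlt, zero_mul]
  · rw [hB hgt, mul_zero]

/-- The `i`-th diagonal entry, as an algebra homomorphism on the upper triangular matrices. -/
def upperTriangularDiagEntry [CommSemiring R] (i : n) :
    blockTriangularSubalgebra R R (id : n → n) →ₐ[R] R where
  toFun A := A.1 i i
  map_one' := Matrix.one_apply_eq i
  map_mul' A B := mul_apply_self_of_isUpperTriangular A.2 B.2 i
  map_zero' := rfl
  map_add' _ _ := rfl
  commutes' r := by simp [Matrix.algebraMap_matrix_apply]

lemma orderedEval_apply_self_of_isUpperTriangular [CommSemiring R] {S : Fin d → Matrix n n R}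
    (hS : ∀ k, (S k).IsUpperTriangular) (p : MvPolynomial (Fin d) R) (i : n) :
    orderedEval S p i i = MvPolynomial.eval (fun k => S k i i) p := by
  let T := blockTriangularSubalgebra R R (id : n → n)
  let t : Fin d → T := fun k => ⟨S k, hS k⟩
  calc orderedEval S p i i
      = T.val (orderedEval t p) i i := by rw [map_orderedEval]; rfl
    _ = upperTriangularDiagEntry i (orderedEval t p) := rfl
    _ = orderedEval (fun k => S k i i) p := map_orderedEval _ t p
    _ = MvPolynomial.eval (fun k => S k i i) p := orderedEval_eq_eval _ p

variable [CommRing R]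

lemma pow_card_eq_zero_of_isUpperTriangular {A : Matrix n n R} (hA : A.IsUpperTriangular)
    (hdiag : ∀ i, A i i = 0) : A ^ Fintype.card n = 0 := by
  have hchar : A.charpoly = Polynomial.X ^ Fintype.card n := by
    simp [Matrix.charpoly_of_isUpperTriangular A hA, hdiag]
  simpa [hchar] using Matrix.aeval_self_charpoly A

lemma one_sub_mul_pow_card_eq_zero_of_isUpperTriangular {S : Fin d → Matrix n n R}
    (hS : ∀ k, (S k).IsUpperTriangular) {h g : MvPolynomial (Fin d) R}
    (hg : ∀ i, MvPolynomial.eval (fun k => S k i i) g *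
      MvPolynomial.eval (fun k => S k i i) h = 1) :
    (1 - orderedEval S h * orderedEval S g) ^ Fintype.card n = 0 := by
  have htri (p : MvPolynomial (Fin d) R) : (orderedEval S p).IsUpperTriangular :=
    orderedEval_mem (T := blockTriangularSubalgebra R R (id : n → n)) hS p
  refine pow_card_eq_zero_of_isUpperTriangular
    (blockTriangular_one.sub ((htri h).mul (htri g))) fun i => ?_
  rw [Matrix.sub_apply, Matrix.one_apply_eq, mul_apply_self_of_isUpperTriangular (htri h) (htri g),
    orderedEval_apply_self_of_isUpperTriangular hS, orderedEval_apply_self_of_isUpperTriangular hS,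
    mul_comm, hg, sub_self]

lemma one_sub_mul_pow_card_eq_zero {S : Fin d → Matrix n n R} (U : (Matrix n n R)ˣ)
    (htri : ∀ k, (U.val * S k * U⁻¹.val).IsUpperTriangular) {h g : MvPolynomial (Fin d) R}
    (hg : ∀ i, MvPolynomial.eval (fun k => (U.val * S k * U⁻¹.val) i i) g *
      MvPolynomial.eval (fun k => (U.val * S k * U⁻¹.val) i i) h = 1) :
    (1 - orderedEval S h * orderedEval S g) ^ Fintype.card n = 0 := by
  let conj := MulSemiringAction.toAlgEquiv R (Matrix n n R) (ConjAct.toConjAct U)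
  have hconj (p : MvPolynomial (Fin d) R) :
      conj (orderedEval S p) = orderedEval (fun k => U.val * S k * U⁻¹.val) p :=
    map_orderedEval conj.toAlgHom S p
  apply conj.injective
  simpa only [map_pow, map_sub, map_one, map_mul, map_zero, hconj] using
    one_sub_mul_pow_card_eq_zero_of_isUpperTriangular htri hg

end UpperTriangular

lemma isUnit_of_isNilpotent_one_sub_mul {A : Type*} [Ring A] [IsDedekindFiniteMonoid A] {a b : A}
    (hab : IsNilpotent (1 - a * b)) : IsUnit a :=
  isUnit_of_mul_isUnit_left (y := b) (by simpa only [sub_sub_cancel] using hab.isUnit_one_sub)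

/-- The sequences of residuals `e`, corrections `z` and approximations `x` produced by the iterative
approximation algorithm for `H x = b` with approximate inverse `G`. The value `z 0` is
unconstrained, since the corrections are indexed from `1`. -/
structure IsIterativeApproximation {R m n : Type*} [Fintype m] [Fintype n] [Ring R]
    (H : Matrix m n R) (G : Matrix n m R) (b : m → R)
    (e : ℕ → m → R) (z x : ℕ → n → R) : Prop where
  residual_zero : e 0 = b
  approx_zero : x 0 = 0
  correction_succ : ∀ k, z (k + 1) = G *ᵥ e k
  residual_succ : ∀ k, e (k + 1) = e k - H *ᵥ z (k + 1)
  approx_succ : ∀ k, x (k + 1) = x k + z (k + 1)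

namespace IsIterativeApproximation

section Ring

variable {R m n : Type*} [Fintype m] [Fintype n] [Ring R]
  {H : Matrix m n R} {G : Matrix n m R} {b : m → R} {e : ℕ → m → R} {z x : ℕ → n → R}

lemma residual_eq_pow_mulVec [DecidableEq m] (hx : IsIterativeApproximation H G b e z x) (k : ℕ) :
    e k = (1 - H * G) ^ k *ᵥ b := by
  induction k with
  | zero => rw [hx.residual_zero, pow_zero, one_mulVec]
  | succ k ih =>
    rw [hx.residual_succ, hx.correction_succ, pow_succ', ← mulVec_mulVec, ← ih, sub_mulVec,
      one_mulVec, mulVec_mulVec]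

lemma residual_eq_sub_mulVec (hx : IsIterativeApproximation H G b e z x) (k : ℕ) :
    e k = b - H *ᵥ x k := by
  induction k with
  | zero => rw [hx.residual_zero, hx.approx_zero, mulVec_zero, sub_zero]
  | succ k ih => rw [hx.residual_succ, hx.approx_succ, ih, mulVec_add, sub_sub]

lemma mulVec_approx_eq [DecidableEq m] (hx : IsIterativeApproximation H G b e z x) {k : ℕ}
    (hk : (1 - H * G) ^ k = 0) : H *ᵥ x k = b := by
  have hres : b - H *ᵥ x k = 0 := by
    rw [← hx.residual_eq_sub_mulVec, hx.residual_eq_pow_mulVec, hk, zero_mulVec]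
  exact (sub_eq_zero.mp hres).symm

end Ring

lemma approx_eq_inv_mulVec {R n : Type*} [CommRing R] [Fintype n] [DecidableEq n]
    {H G : Matrix n n R} {b : n → R} {e z x : ℕ → n → R}
    (hx : IsIterativeApproximation H G b e z x) {k : ℕ} (hk : (1 - H * G) ^ k = 0) :
    x k = H⁻¹ *ᵥ b := by
  have := (isUnit_of_isNilpotent_one_sub_mul ⟨k, hk⟩).invertible
  exact (inv_mulVec_eq_vec (hx.mulVec_approx_eq hk).symm).symm

end IsIterativeApproximation

theorem interpolation_converges_in_N_steps_general {R n : Type*} [CommRing R] [Fintype n]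
    [LinearOrder n] {d : ℕ} (S : Fin d → Matrix n n R) (U : (Matrix n n R)ˣ)
    (htri : ∀ k, (U.val * S k * U⁻¹.val).IsUpperTriangular)
    (lam : n → Fin d → R) (hlam : ∀ i k, lam i k = (U.val * S k * U⁻¹.val) i i)
    (h g : MvPolynomial (Fin d) R)
    (hg : ∀ i, MvPolynomial.eval (lam i) g * MvPolynomial.eval (lam i) h = 1) :
    (1 - orderedEval S h * orderedEval S g) ^ Fintype.card n = 0 ∧
    ∀ (b : n → R) (e z x : ℕ → n → R),
      IsIterativeApproximation (orderedEval S h) (orderedEval S g) b e z x →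
      ∀ m, Fintype.card n ≤ m → x m = (orderedEval S h)⁻¹ *ᵥ b := by
  obtain rfl : lam = fun i k => (U.val * S k * U⁻¹.val) i i := funext₂ hlam
  have hnil := one_sub_mul_pow_card_eq_zero U htri hg
  exact ⟨hnil, fun _ _ _ _ hx _ hm => hx.approx_eq_inv_mulVec (pow_eq_zero_of_le hm hnil)⟩

/-- if `g` interpolates `1/h` on the joint spectrum, i.e. `g(λᵢ) h(λᵢ) = 1` for all
`i`, then with `H = h(S₁,…,S_d)` and `G = g(S₁,…,S_d)` we have `(I − H G)^N = 0`; consequently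
the iterative approximation algorithm converges in at most `N` steps: `x⁽ᵐ⁾ = H⁻¹ b` for all
`m ≥ N`. -/
theorem interpolation_converges_in_N_steps {N d : ℕ}
    (S : Fin d → Matrix (Fin N) (Fin N) ℂ)
    (hcomm : ∀ k k' : Fin d, Commute (S k) (S k'))
    (U : Matrix (Fin N) (Fin N) ℂ) (hU : U ∈ Matrix.unitaryGroup (Fin N) ℂ)
    (htri : ∀ k : Fin d, (U * S k * Uᴴ).BlockTriangular (id : Fin N → Fin N))
    (lam : Fin N → Fin d → ℂ)
    (hlam : ∀ (i : Fin N) (k : Fin d), lam i k = (U * S k * Uᴴ) i i)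
    (h g : MvPolynomial (Fin d) ℂ)
    (hh : ∀ i : Fin N, MvPolynomial.eval (lam i) h ≠ 0)
    (hg : ∀ i : Fin N, MvPolynomial.eval (lam i) g * MvPolynomial.eval (lam i) h = 1)
    (H G : Matrix (Fin N) (Fin N) ℂ)
    (hH : H = polyFilter S h) (hG : G = polyFilter S g) :
    (1 - H * G) ^ N = 0 ∧
    ∀ (b : Fin N → ℂ) (e z x : ℕ → Fin N → ℂ),
      e 0 = b → x 0 = 0 →
      (∀ m : ℕ, z (m + 1) = G.mulVec (e m)) →
      (∀ m : ℕ, e (m + 1) = e m - H.mulVec (z (m + 1))) →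
      (∀ m : ℕ, x (m + 1) = x m + z (m + 1)) →
      ∀ m : ℕ, N ≤ m → x m = H⁻¹.mulVec b := by
  obtain rfl : H = orderedEval S h := hH
  obtain rfl : G = orderedEval S g := hG
  obtain ⟨hnil, hconv⟩ :=
    interpolation_converges_in_N_steps_general S (Unitary.toUnits ⟨U, hU⟩) htri lam hlam h g hg
  rw [Fintype.card_fin] at hnil hconv
  exact ⟨hnil, fun b e z x he₀ hx₀ hz he hx => hconv b e z x ⟨he₀, hx₀, hz, he, hx⟩⟩
end

section
/- Let S₁,…,S_d be pairwise commuting Hermitian N×N complex matrices, let h and g be multivariate polynomials such that H = h(S₁,…,S_d) is invertible, and set G = g(S₁,…,S_d). Then ‖I − G H‖₂ = ρ(I − G H); moreover, if β := ρ(I − G H) < 1, then for every b ∈ ℂ^N the iterates x⁽ᵐ⁾ of the iterative approximation algorithm satisfy ‖x⁽ᵐ⁾ − H⁻¹ b‖₂ ≤ (‖H‖₂ ‖G‖₂ / (1 − β)) · βᵐ · ‖H⁻¹ b‖₂ for all m ≥ 1. -/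
open Matrix

/-- The Euclidean (ℓ²) norm of a vector in ℂ^N. -/
noncomputable def l2norm {N : ℕ} (v : Fin N → ℂ) : ℝ :=
  ‖(EuclideanSpace.equiv (Fin N) ℂ).symm v‖

/-- The spectral radius of an N×N complex matrix. -/
noncomputable def specRad {N : ℕ} (A : Matrix (Fin N) (Fin N) ℂ) : ℝ :=
  sSup ((fun z : ℂ => ‖z‖) '' spectrum ℂ A)

/-- The ℓ²→ℓ² operator norm of an N×N complex matrix. -/
noncomputable def opNorm {N : ℕ} (A : Matrix (Fin N) (Fin N) ℂ) : ℝ :=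
  ‖LinearMap.toContinuousLinearMap (Matrix.toEuclideanLin A)‖

/-! Every polynomial in commuting normal matrices lies in the star algebra they generate, which is
commutative by Fuglede's theorem, so `1 - G * H` is normal and its norm equals its spectral radius.
With `y = H⁻¹ b`, the residual of the iteration is `e m = H (y - x m)`; hence the error `x m - y` is
multiplied by `1 - G * H` at each step and decays like `‖1 - G * H‖ ^ m`. The constant
`‖H‖ ‖G‖ / (1 - ‖1 - G * H‖)` only weakens this bound, since `v = (1 - G * H) v + G (H v)` gives
`(1 - ‖1 - G * H‖) ‖v‖ ≤ ‖H‖ ‖G‖ ‖v‖`. -/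

/-- The iterative approximation algorithm for solving `H x = b` with approximate inverse `G`:
`e` is the sequence of residuals, `z` of corrections and `x` of iterates. The maps are plain
functions so that matrices (through `mulVec`) and linear maps are both covered; the value `z 0`
is unconstrained. -/
structure IsIterativeApproximation_s11 {E : Type*} [AddCommGroup E] (H G : E → E) (b : E)
    (e z x : ℕ → E) : Prop where
  residual_zero : e 0 = b
  iterate_zero : x 0 = 0
  correction_succ (m : ℕ) : z (m + 1) = G (e m)
  residual_succ (m : ℕ) : e (m + 1) = e m - H (z (m + 1))
  iterate_succ (m : ℕ) : x (m + 1) = x m + z (m + 1)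

namespace IsIterativeApproximation_s11

section Additive

variable {E E' F : Type*} [AddCommGroup E] [AddCommGroup E'] [FunLike F E E]
  [AddMonoidHomClass F E E] {e z x : ℕ → E} {y : E}

theorem map {H G : E → E} {H' G' : E' → E'} {b : E} (φ : E →+ E') (hH : Function.Semiconj φ H H')
    (hG : Function.Semiconj φ G G') (h : IsIterativeApproximation_s11 H G b e z x) :
    IsIterativeApproximation_s11 H' G' (φ b) (φ ∘ e) (φ ∘ z) (φ ∘ x) where
  residual_zero := congrArg φ h.residual_zero
  iterate_zero := by simp [h.iterate_zero]
  correction_succ m := by simp [h.correction_succ, hG.eq]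
  residual_succ m := by simp [h.residual_succ, hH.eq]
  iterate_succ m := by simp [h.iterate_succ]

theorem residual_eq {H : F} {G : E → E} (h : IsIterativeApproximation_s11 H G (H y) e z x) (m : ℕ) :
    e m = H (y - x m) := by
  induction m with
  | zero => rw [h.residual_zero, h.iterate_zero, sub_zero]
  | succ m ih => rw [h.residual_succ, h.iterate_succ, ih, ← map_sub, sub_sub]

theorem error_succ {H G : F} (h : IsIterativeApproximation_s11 H G (H y) e z x) (m : ℕ) :
    x (m + 1) - y = (x m - y) - G (H (x m - y)) := by
  rw [h.iterate_succ, h.correction_succ, h.residual_eq, ← neg_sub (x m) y, map_neg, map_neg]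
  abel

end Additive

end IsIterativeApproximation_s11

section NormedSpace

variable {𝕜 E : Type*} [NontriviallyNormedField 𝕜] [SeminormedAddCommGroup E] [NormedSpace 𝕜 E]

theorem one_sub_norm_one_sub_mul_norm_le (T : E →L[𝕜] E) (v : E) :
    (1 - ‖1 - T‖) * ‖v‖ ≤ ‖T‖ * ‖v‖ := by
  have hsplit : ‖v‖ ≤ ‖1 - T‖ * ‖v‖ + ‖T‖ * ‖v‖ :=
    calc ‖v‖ = ‖(1 - T) v + T v‖ := by simp
      _ ≤ ‖1 - T‖ * ‖v‖ + ‖T‖ * ‖v‖ := norm_add_le_of_le ((1 - T).le_opNorm v) (T.le_opNorm v)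
  linarith

namespace IsIterativeApproximation_s11

variable {H G : E →L[𝕜] E} {y : E} {e z x : ℕ → E}

theorem norm_error_le_pow (h : IsIterativeApproximation_s11 H G (H y) e z x) (m : ℕ) :
    ‖x m - y‖ ≤ ‖1 - G * H‖ ^ m * ‖y‖ := by
  induction m with
  | zero => simp [h.iterate_zero]
  | succ m ih =>
    calc ‖x (m + 1) - y‖ = ‖(1 - G * H) (x m - y)‖ := by rw [h.error_succ]; rfl
      _ ≤ ‖1 - G * H‖ * (‖1 - G * H‖ ^ m * ‖y‖) := (1 - G * H).le_opNorm_of_le ih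
      _ = ‖1 - G * H‖ ^ (m + 1) * ‖y‖ := by ring

theorem norm_error_le (h : IsIterativeApproximation_s11 H G (H y) e z x) (hGH : ‖1 - G * H‖ < 1)
    (m : ℕ) :
    ‖x m - y‖ ≤ ‖H‖ * ‖G‖ / (1 - ‖1 - G * H‖) * ‖1 - G * H‖ ^ m * ‖y‖ := by
  have hy : ‖y‖ ≤ ‖H‖ * ‖G‖ / (1 - ‖1 - G * H‖) * ‖y‖ := by
    rw [div_mul_eq_mul_div, le_div_iff₀' (sub_pos.2 hGH)]
    calc (1 - ‖1 - G * H‖) * ‖y‖ ≤ ‖G * H‖ * ‖y‖ := one_sub_norm_one_sub_mul_norm_le _ y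
      _ ≤ ‖H‖ * ‖G‖ * ‖y‖ := by rw [mul_comm ‖H‖]; gcongr; exact norm_mul_le G H
  calc ‖x m - y‖ ≤ ‖1 - G * H‖ ^ m * ‖y‖ := h.norm_error_le_pow m
    _ ≤ ‖1 - G * H‖ ^ m * (‖H‖ * ‖G‖ / (1 - ‖1 - G * H‖) * ‖y‖) := by gcongr
    _ = ‖H‖ * ‖G‖ / (1 - ‖1 - G * H‖) * ‖1 - G * H‖ ^ m * ‖y‖ := by ring

end IsIterativeApproximation_s11

end NormedSpace

theorem isUnit_right_of_norm_one_sub_mul_lt_one {R : Type*} [NormedRing R] [HasSummableGeomSeries R]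
    [IsDedekindFiniteMonoid R] {a b : R} (hab : ‖1 - a * b‖ < 1) : IsUnit b := by
  have hunit : IsUnit (a * b) := by simpa using isUnit_one_sub_of_norm_lt_one hab
  exact isUnit_of_mul_isUnit_right hunit

theorem isStarNormal_of_mem_adjoin {A : Type*} [CStarAlgebra A] {s : Set A}
    (hcomm : ∀ a ∈ s, ∀ b ∈ s, Commute a b) (hnormal : ∀ a ∈ s, IsStarNormal a) {a : A}
    (ha : a ∈ StarAlgebra.adjoin ℂ s) : IsStarNormal a := by
  have hcomm_star : ∀ a ∈ s, ∀ b ∈ s, Commute a (star b) := fun a ha b hb =>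
    (hnormal b hb).commute_star_right (hcomm a ha b hb)
  have := StarAlgebra.isMulCommutative_adjoin ℂ hcomm hcomm_star
  exact ⟨setLike_mul_comm (star_mem ha) ha⟩

open scoped Matrix.Norms.L2Operator

section Matrix

variable {n 𝕜 : Type*} [Fintype n] [DecidableEq n] [RCLike 𝕜] {H G : Matrix n n 𝕜} {b : n → 𝕜}
  {e z x : ℕ → n → 𝕜}

namespace IsIterativeApproximation_s11

theorem toEuclidean (h : IsIterativeApproximation_s11 H.mulVec G.mulVec b e z x) :
    IsIterativeApproximation_s11 (toEuclideanCLM (𝕜 := 𝕜) H) (toEuclideanCLM (𝕜 := 𝕜) G)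
      (WithLp.toLp 2 b) (WithLp.toLp 2 ∘ e) (WithLp.toLp 2 ∘ z) (WithLp.toLp 2 ∘ x) :=
  h.map (WithLp.addEquiv 2 (n → 𝕜)).symm.toAddMonoidHom (fun _ => rfl) (fun _ => rfl)

theorem norm_toLp_error_le (h : IsIterativeApproximation_s11 H.mulVec G.mulVec b e z x)
    (hGH : ‖1 - G * H‖ < 1) (m : ℕ) :
    ‖WithLp.toLp 2 (x m - H⁻¹ *ᵥ b)‖ ≤
      ‖H‖ * ‖G‖ / (1 - ‖1 - G * H‖) * ‖1 - G * H‖ ^ m * ‖WithLp.toLp 2 (H⁻¹ *ᵥ b)‖ := by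
  have hdet : IsUnit H.det :=
    (isUnit_iff_isUnit_det H).1 (isUnit_right_of_norm_one_sub_mul_lt_one hGH)
  have hsol : H *ᵥ (H⁻¹ *ᵥ b) = b := by rw [mulVec_mulVec, mul_nonsing_inv H hdet, one_mulVec]
  have hEuclidean := h.toEuclidean
  rw [← hsol, ← toEuclideanCLM_toLp] at hEuclidean
  have hnorm : ‖1 - toEuclideanCLM (𝕜 := 𝕜) G * toEuclideanCLM (𝕜 := 𝕜) H‖ = ‖1 - G * H‖ := by
    rw [← map_mul, ← map_one (toEuclideanCLM (𝕜 := 𝕜)), ← map_sub, l2_opNorm_toEuclideanCLM]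
  simpa only [hnorm, l2_opNorm_toEuclideanCLM, Function.comp_apply, ← WithLp.toLp_sub] using
    hEuclidean.norm_error_le (hnorm.trans_lt hGH) m

end IsIterativeApproximation_s11

end Matrix

section GraphFilter

variable {N d : ℕ}

theorem opNorm_eq_norm (A : Matrix (Fin N) (Fin N) ℂ) : opNorm A = ‖A‖ := rfl

theorem specRad_eq_toReal_spectralRadius (A : Matrix (Fin N) (Fin N) ℂ) :
    specRad A = (spectralRadius ℂ A).toReal := by
  rw [spectralRadius, ← sSup_image, ENNReal.toReal_sSup _ (by simp), Set.image_image]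
  rfl

theorem opNorm_eq_specRad (A : Matrix (Fin N) (Fin N) ℂ) [IsStarNormal A] :
    opNorm A = specRad A := by
  rw [specRad_eq_toReal_spectralRadius, IsStarNormal.spectralRadius_eq_nnnorm A]
  rfl

theorem polyFilter_mem {S : Fin d → Matrix (Fin N) (Fin N) ℂ}
    {U : Subalgebra ℂ (Matrix (Fin N) (Fin N) ℂ)} (hS : ∀ k, S k ∈ U)
    (h : MvPolynomial (Fin d) ℂ) : polyFilter S h ∈ U := by
  refine sum_mem fun m _ => U.smul_mem (list_prod_mem fun A hA => ?_) _
  obtain ⟨k, rfl⟩ := List.mem_ofFn.1 hA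
  exact pow_mem (hS k) _

theorem isStarNormal_one_sub_polyFilter_mul_polyFilter {S : Fin d → Matrix (Fin N) (Fin N) ℂ}
    (hcomm : ∀ k k', Commute (S k) (S k')) (hnormal : ∀ k, IsStarNormal (S k))
    (g h : MvPolynomial (Fin d) ℂ) : IsStarNormal (1 - polyFilter S g * polyFilter S h) := by
  have hmem (p : MvPolynomial (Fin d) ℂ) :
      polyFilter S p ∈ StarAlgebra.adjoin ℂ (Set.range S) :=
    polyFilter_mem (U := (StarAlgebra.adjoin ℂ (Set.range S)).toSubalgebra)
      (fun k => StarAlgebra.subset_adjoin ℂ _ (Set.mem_range_self k)) p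
  refine isStarNormal_of_mem_adjoin ?_ ?_ (sub_mem (one_mem _) (mul_mem (hmem g) (hmem h)))
  · simpa only [Set.forall_mem_range] using hcomm
  · simpa only [Set.forall_mem_range] using hnormal

end GraphFilter

theorem hermitian_shifts_norm_eq_specRad_and_convergence_general {N : ℕ}
    {H G : Matrix (Fin N) (Fin N) ℂ} (hnormal : IsStarNormal (1 - G * H)) :
    opNorm (1 - G * H) = specRad (1 - G * H) ∧
    (specRad (1 - G * H) < 1 →
      ∀ {b : Fin N → ℂ} {e z x : ℕ → Fin N → ℂ},
        IsIterativeApproximation_s11 H.mulVec G.mulVec b e z x →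
        ∀ m : ℕ,
          l2norm (x m - H⁻¹.mulVec b) ≤
            opNorm H * opNorm G / (1 - specRad (1 - G * H)) *
              specRad (1 - G * H) ^ m * l2norm (H⁻¹.mulVec b)) := by
  refine ⟨opNorm_eq_specRad _, ?_⟩
  simp only [← opNorm_eq_specRad, opNorm_eq_norm]
  exact fun hGH _ _ _ _ h m => h.norm_toLp_error_le hGH m

/-- for commuting Hermitian shifts `S₁,…,S_d`, `H = h(S₁,…,S_d)` invertible and
`G = g(S₁,…,S_d)`, one has `‖I − G H‖₂ = ρ(I − G H)`; moreover, if `β = ρ(I − G H) < 1`, then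
the iterates of the iterative approximation algorithm satisfy
`‖x⁽ᵐ⁾ − H⁻¹ b‖₂ ≤ (‖H‖₂ ‖G‖₂ / (1 − β)) βᵐ ‖H⁻¹ b‖₂` for all `m ≥ 1`. -/
theorem hermitian_shifts_norm_eq_specRad_and_convergence {N d : ℕ}
    (S : Fin d → Matrix (Fin N) (Fin N) ℂ)
    (hcomm : ∀ k k' : Fin d, Commute (S k) (S k'))
    (hherm : ∀ k : Fin d, (S k).IsHermitian)
    (h g : MvPolynomial (Fin d) ℂ)
    (H G : Matrix (Fin N) (Fin N) ℂ)
    (hH : H = polyFilter S h) (hG : G = polyFilter S g) (hinv : IsUnit H) :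
    opNorm (1 - G * H) = specRad (1 - G * H) ∧
    (specRad (1 - G * H) < 1 →
      ∀ (b : Fin N → ℂ) (e z x : ℕ → Fin N → ℂ),
        e 0 = b → x 0 = 0 →
        (∀ m : ℕ, z (m + 1) = G.mulVec (e m)) →
        (∀ m : ℕ, e (m + 1) = e m - H.mulVec (z (m + 1))) →
        (∀ m : ℕ, x (m + 1) = x m + z (m + 1)) →
        ∀ m : ℕ, 1 ≤ m →
          l2norm (x m - H⁻¹.mulVec b) ≤
            opNorm H * opNorm G / (1 - specRad (1 - G * H)) *
              specRad (1 - G * H) ^ m * l2norm (H⁻¹.mulVec b)) := by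
  subst hH hG
  have hnormal (k : Fin d) : IsStarNormal (S k) := (hherm k).isSelfAdjoint.isStarNormal
  obtain ⟨heq, hbound⟩ := hermitian_shifts_norm_eq_specRad_and_convergence_general
    (isStarNormal_one_sub_polyFilter_mul_polyFilter hcomm hnormal g h)
  exact ⟨heq, fun hβ _ _ _ _ he₀ hx₀ hz he hx m _ => hbound hβ ⟨he₀, hx₀, hz, he, hx⟩ m⟩
end

section
/- Let S₁,…,S_d be pairwise commuting N×N complex matrices, U a unitary matrix such that Ŝ_k = U S_k Uᴴ is upper triangular for every k, and suppose the joint spectrum points λ_i = (Ŝ₁(i,i),…,Ŝ_d(i,i)), 1 ≤ i ≤ N, are pairwise distinct elements of ℂ^d. Then every N×N complex matrix H satisfying H S_k = S_k H for all 1 ≤ k ≤ d is a polynomial graph filter of S₁,…,S_d, i.e., there exists a multivariate polynomial h such that H = h(S₁,…,S_d). -/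
open Matrix

/-!
A generic linear combination `T = ∑ k, c k • S k` has pairwise distinct eigenvalues
`∑ k, c k * λᵢ k`, hence an eigenbasis with one-dimensional eigenspaces. A matrix `H` commuting with
the `S k` commutes with `T`, preserves these lines, and is therefore diagonal in the eigenbasis;
Lagrange interpolation at the eigenvalues then writes `H` as a polynomial in the single matrix `T`.
-/

section Eigenbasis

variable {ι K V : Type*} [Field K] [AddCommGroup V] [Module K V] {f g : Module.End K V} {μ : ι → K}

lemma eigenspace_eq_span_singleton_of_basis (hμ : Function.Injective μ) (b : Module.Basis ι K V)
    (hb : ∀ i, f.HasEigenvector (μ i) (b i)) (i : ι) : f.eigenspace (μ i) = K ∙ b i := by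
  refine le_antisymm (fun v hv => ?_) ((Submodule.span_singleton_le_iff_mem _ _).2 (hb i).1)
  have repr_apply (j : ι) : b.repr (f v) j = μ j * b.repr v j := by
    have coord_comp : b.coord j ∘ₗ f = μ j • b.coord j := b.ext fun k => by
      obtain rfl | hkj := eq_or_ne k j <;> simp [(hb _).apply_eq_smul, *]
    exact LinearMap.congr_fun coord_comp v
  have repr_eq_zero (j : ι) (hj : j ≠ i) : b.repr v j = 0 := by
    have h : μ i * b.repr v j = μ j * b.repr v j := by
      rw [← repr_apply, Module.End.mem_eigenspace_iff.1 hv, map_smul, Finsupp.smul_apply,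
        smul_eq_mul]
    exact (mul_eq_mul_right_iff.1 h).resolve_left fun hij => hj (hμ hij).symm
  refine Submodule.mem_span_singleton.2 ⟨b.repr v i, b.repr.injective (Finsupp.ext fun j => ?_)⟩
  obtain rfl | hj := eq_or_ne j i
  · simp
  · simp [repr_eq_zero j hj, hj]

lemma mem_adjoin_singleton_of_commute_of_basis [Finite ι] (hμ : Function.Injective μ)
    (b : Module.Basis ι K V) (hb : ∀ i, f.HasEigenvector (μ i) (b i)) (hfg : Commute f g) :
    g ∈ Algebra.adjoin K {f} := by
  classical
  cases nonempty_fintype ι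
  have g_mem_span (i : ι) : g (b i) ∈ K ∙ b i := by
    rw [← eigenspace_eq_span_singleton_of_basis hμ b hb]
    exact Module.End.mapsTo_genEigenspace_of_comm hfg (μ i) 1 (hb i).1
  choose ν hν using fun i => Submodule.mem_span_singleton.1 (g_mem_span i)
  let p := Lagrange.interpolate Finset.univ μ ν
  have aeval_eq : Polynomial.aeval f p = g := b.ext fun i => by
    rw [Module.End.aeval_apply_of_hasEigenvector (hb i),
      Lagrange.eval_interpolate_at_node ν hμ.injOn (Finset.mem_univ i), hν]
  exact aeval_eq ▸ Polynomial.aeval_mem_adjoin_singleton K f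

end Eigenbasis

section Matrix

variable {ι κ n K : Type*} [Field K] [Fintype n]

lemma mem_adjoin_singleton_of_commute_of_mem_spectrum [DecidableEq n] {T H : Matrix n n K}
    {μ : n → K} (hμ : Function.Injective μ) (hspec : ∀ i, μ i ∈ spectrum K T)
    (hTH : Commute T H) : H ∈ Algebra.adjoin K {T} := by
  let e : Matrix n n K ≃ₐ[K] Module.End K (n → K) := Matrix.toLinAlgEquiv'
  have hasEigenvalue (i : n) : (e T).HasEigenvalue (μ i) := by
    rw [Module.End.hasEigenvalue_iff_mem_spectrum, AlgEquiv.spectrum_eq]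
    exact hspec i
  choose v hv using fun i => (hasEigenvalue i).exists_hasEigenvector
  let b := basisOfLinearIndependentOfCardEqFinrank' v
    ((e T).eigenvectors_linearIndependent' μ hμ v hv) (by simp)
  have he : e H ∈ Algebra.adjoin K {e T} :=
    mem_adjoin_singleton_of_commute_of_basis hμ b (by simpa [b] using hv) (hTH.map e)
  rw [← Set.image_singleton, ← AlgEquiv.coe_toAlgHom, ← AlgHom.map_adjoin] at he
  obtain ⟨H', hH', heq⟩ := he
  exact e.injective heq ▸ hH'

lemma diag_mem_spectrum_of_isUpperTriangular [LinearOrder n] {M : Matrix n n K}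
    (hM : M.IsUpperTriangular) (i : n) : M i i ∈ spectrum K M := by
  rw [Matrix.mem_spectrum_iff_isRoot_charpoly, Matrix.charpoly_of_isUpperTriangular M hM,
    Polynomial.isRoot_prod]
  exact ⟨i, Finset.mem_univ i, Polynomial.root_X_sub_C.2 rfl⟩

lemma exists_injective_dotProduct [Finite ι] [Fintype κ] [Infinite K] {v : ι → κ → K}
    (hv : Function.Injective v) : ∃ c : κ → K, Function.Injective fun i => c ⬝ᵥ v i := by
  classical
  obtain ⟨φ, hφ⟩ := Module.exists_dual_forall_apply_ne_zero (K := K)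
    (fun ij : {ij : ι × ι // ij.1 ≠ ij.2} => v ij.1.1 - v ij.1.2)
    fun ij => sub_ne_zero.2 (hv.ne ij.2)
  obtain ⟨c, rfl⟩ := (dotProductEquiv K κ).surjective φ
  refine ⟨c, fun i j hij => ?_⟩
  by_contra hne
  exact hφ ⟨(i, j), hne⟩ (by simpa [sub_eq_zero] using hij)

end Matrix

open scoped IsMulCommutative in
lemma polyFilter_coe_eq_aeval {N d : ℕ} {A : Subalgebra ℂ (Matrix (Fin N) (Fin N) ℂ)}
    [IsMulCommutative A] (s : Fin d → A) (h : MvPolynomial (Fin d) ℂ) :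
    polyFilter (fun k => (s k : Matrix (Fin N) (Fin N) ℂ)) h = MvPolynomial.aeval s h := by
  simp only [polyFilter, MvPolynomial.aeval_def, MvPolynomial.eval₂_eq', ← Algebra.smul_def,
    ← List.prod_ofFn, AddSubmonoidClass.coe_finsetSum, SetLike.val_smul,
    SubmonoidClass.coe_list_prod, List.map_ofFn, Function.comp_def, SubmonoidClass.coe_pow]

open scoped IsMulCommutative in
lemma exists_eq_polyFilter_of_mem_adjoin_range {N d : ℕ} {S : Fin d → Matrix (Fin N) (Fin N) ℂ}
    (hcomm : ∀ k k', Commute (S k) (S k')) {H : Matrix (Fin N) (Fin N) ℂ}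
    (hH : H ∈ Algebra.adjoin ℂ (Set.range S)) : ∃ h, H = polyFilter S h := by
  let A := Algebra.adjoin ℂ (Set.range S)
  have : IsMulCommutative A := Algebra.isMulCommutative_adjoin ℂ <| by
    rintro _ ⟨k, rfl⟩ _ ⟨k', rfl⟩
    exact hcomm k k'
  let s (k : Fin d) : A := ⟨S k, Algebra.subset_adjoin ⟨k, rfl⟩⟩
  have adjoin_eq_map : A = (MvPolynomial.aeval (R := ℂ) s).range.map A.val := by
    rw [← Algebra.adjoin_range_eq_range_aeval, AlgHom.map_adjoin, ← Set.range_comp]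
    rfl
  obtain ⟨_, ⟨h, rfl⟩, rfl⟩ := adjoin_eq_map.le hH
  exact ⟨h, (polyFilter_coe_eq_aeval s h).symm⟩

theorem commuting_filter_is_polynomial_general {ι n K : Type*} [Field K] [Infinite K] [Fintype ι]
    [Fintype n] [LinearOrder n] (S : ι → Matrix n n K) (P : (Matrix n n K)ˣ)
    (htri : ∀ k, (P.val * S k * P⁻¹.val).IsUpperTriangular)
    (hdist : Function.Injective fun i k => (P.val * S k * P⁻¹.val) i i) :
    ∃ c : ι → K, ∀ H, (∀ k, Commute H (S k)) → H ∈ Algebra.adjoin K {∑ k, c k • S k} := by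
  obtain ⟨c, hc⟩ := exists_injective_dotProduct hdist
  refine ⟨c, fun H hH => mem_adjoin_singleton_of_commute_of_mem_spectrum hc (fun i => ?_)
    (.sum_left _ _ _ fun k _ => (hH k).symm.smul_left (c k))⟩
  have conj_sum : P.val * (∑ k, c k • S k) * P⁻¹.val = ∑ k, c k • (P.val * S k * P⁻¹.val) := by
    simp only [Finset.mul_sum, Finset.sum_mul, mul_smul_comm, smul_mul_assoc]
  have conj_tri : (P.val * (∑ k, c k • S k) * P⁻¹.val).IsUpperTriangular := by
    rw [conj_sum]
    exact sum_mem (S := Matrix.blockTriangularSubalgebra K K id)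
      fun k _ => Subalgebra.smul_mem _ (htri k) (c k)
  have diag_mem := diag_mem_spectrum_of_isUpperTriangular conj_tri i
  rw [spectrum.units_conjugate, conj_sum] at diag_mem
  simpa only [Matrix.sum_apply, Matrix.smul_apply, smul_eq_mul, dotProduct] using diag_mem

/-- if the joint spectrum points `λᵢ` of the commuting matrices `S₁,…,S_d`
(relative to a simultaneous unitary upper-triangularization) are pairwise distinct, then every
matrix `H` commuting with every `S_k` is a polynomial graph filter of `S₁,…,S_d`. -/
theorem commuting_filter_is_polynomial {N d : ℕ}
    (S : Fin d → Matrix (Fin N) (Fin N) ℂ)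
    (hcomm : ∀ k k' : Fin d, Commute (S k) (S k'))
    (U : Matrix (Fin N) (Fin N) ℂ) (hU : U ∈ Matrix.unitaryGroup (Fin N) ℂ)
    (htri : ∀ k : Fin d, (U * S k * Uᴴ).BlockTriangular (id : Fin N → Fin N))
    (lam : Fin N → Fin d → ℂ)
    (hlam : ∀ (i : Fin N) (k : Fin d), lam i k = (U * S k * Uᴴ) i i)
    (hdist : Function.Injective lam)
    (H : Matrix (Fin N) (Fin N) ℂ)
    (hHcomm : ∀ k : Fin d, H * S k = S k * H) :
    ∃ h : MvPolynomial (Fin d) ℂ, H = polyFilter S h := by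
  obtain rfl : lam = fun i k => (U * S k * Uᴴ) i i := funext₂ hlam
  obtain ⟨c, hc⟩ := commuting_filter_is_polynomial_general S (Unitary.toUnits ⟨U, hU⟩) htri hdist
  have sum_mem_adjoin : ∑ k, c k • S k ∈ Algebra.adjoin ℂ (Set.range S) :=
    sum_mem fun k _ => Subalgebra.smul_mem _ (Algebra.subset_adjoin (Set.mem_range_self k)) (c k)
  exact exists_eq_polyFilter_of_mem_adjoin_range hcomm
    (Algebra.adjoin_singleton_le sum_mem_adjoin (hc H hHcomm))
end

section
/- Let S₁,…,S_d be pairwise commuting nonzero N×N complex matrices that are simultaneously diagonalized by a unitary matrix U (i.e., U S_k Uᴴ = D_k is diagonal for every k), and suppose the joint spectrum points λ_i = (D₁(i,i),…,D_d(i,i)), 1 ≤ i ≤ N, are pairwise distinct. Let 𝒫 be the set of all polynomial graph filters of S₁,…,S_d, and let ‖·‖_F denote the Frobenius norm. Then there exist positive constants C₀ and C₁ such that for every N×N complex matrix H, C₀ (∑_{k=1}^{d} ‖[H,S_k]‖_F²)^{1/2} ≤ inf_{P ∈ 𝒫} ‖H − P‖_F ≤ C₁ (∑_{k=1}^{d}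 ‖[H,S_k]‖_F²)^{1/2}, where [H,S_k] = H S_k − S_k H. -/
open Matrix

/-- The Frobenius norm of an N×N complex matrix. -/
noncomputable def frobNorm {N : ℕ} (A : Matrix (Fin N) (Fin N) ℂ) : ℝ :=
  Real.sqrt (∑ i : Fin N, ∑ j : Fin N, ‖A i j‖ ^ 2)

/-!
Conjugation by `U` preserves Frobenius norms and commutators and turns the shifts into the diagonal
matrices `D k`. By the Chinese remainder theorem for the maximal ideals of the joint spectrum
points, the filters of the family `D` are exactly the diagonal matrices, so the distance from
`G = U H Uᴴ` to them is the Frobenius norm of the off-diagonal part of `G`. On the other hand,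
`∑ₖ ‖[G, D k]‖²` weights the entry `‖G i j‖²` by the squared distance of the `i`-th and `j`-th joint
spectrum points. The constants are therefore the reciprocals of an upper and a lower bound for the
distances between distinct points.
-/

section Interpolation

variable {K σ ι : Type*} [Field K]

open MvPolynomial

lemma vanishingIdeal_singleton_injective :
    Function.Injective fun x : σ → K => vanishingIdeal K {x} := by
  intro x y hxy
  funext k
  have mem_x : X k - C (x k) ∈ vanishingIdeal K {x} := by simp
  have mem_y : X k - C (x k) ∈ vanishingIdeal K {y} := (SetLike.ext_iff.1 hxy _).1 mem_x
  simpa [mem_vanishingIdeal_singleton_iff, sub_eq_zero, eq_comm] using mem_y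

lemma exists_mvPolynomial_eval_eq [Finite ι] {x : ι → σ → K} (hx : Function.Injective x)
    (g : ι → K) : ∃ p : MvPolynomial σ K, ∀ i, eval (x i) p = g i := by
  have coprime : Pairwise fun i j => IsCoprime (vanishingIdeal K {x i}) (vanishingIdeal K {x j}) :=
    fun i j hij => Ideal.isCoprime_of_isMaximal
      (vanishingIdeal_singleton_injective.ne (hx.ne hij))
  obtain ⟨p, hp⟩ := Ideal.exists_forall_sub_mem_ideal coprime fun i => C (g i)
  refine ⟨p, fun i => sub_eq_zero.1 ?_⟩
  simpa [mem_vanishingIdeal_singleton_iff, coe_aeval_eq_eval] using hp i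

end Interpolation

section FiniteFamilies

variable {ι M : Type*} [Finite ι]

lemma exists_pos_forall_dist_le [PseudoMetricSpace M] (x : ι → M) :
    ∃ R > 0, ∀ i j, dist (x i) (x j) ≤ R := by
  have bound : ∀ᶠ R in Filter.atTop, ∀ i j, dist (x i) (x j) ≤ R :=
    Filter.eventually_all.2 fun _ => Filter.eventually_all.2 fun _ => Filter.eventually_ge_atTop _
  exact ((Filter.eventually_gt_atTop 0).and bound).exists

lemma exists_pos_forall_ne_le_dist [MetricSpace M] {x : ι → M} (hx : Function.Injective x) :
    ∃ r > 0, ∀ i j, i ≠ j → r ≤ dist (x i) (x j) := by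
  have bound : ∀ᶠ r in nhdsWithin (0 : ℝ) (Set.Ioi 0), ∀ i j, i ≠ j → r ≤ dist (x i) (x j) :=
    Filter.eventually_all.2 fun _ => Filter.eventually_all.2 fun _ =>
      Filter.eventually_imp_distrib_left.2 fun hij =>
        nhdsWithin_le_nhds (eventually_le_nhds (dist_pos.2 (hx.ne hij)))
  exact (eventually_mem_nhdsWithin.and bound).exists

end FiniteFamilies

section FrobeniusNorm

variable {N : ℕ}

lemma ofReal_sum_norm_sq_eq_trace {𝕜 m n : Type*} [RCLike 𝕜] [Fintype m] [Fintype n]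
    (A : Matrix m n 𝕜) : ((∑ i, ∑ j, ‖A i j‖ ^ 2 : ℝ) : 𝕜) = (A * Aᴴ).trace := by
  simp [trace, mul_apply, RCLike.mul_conj]

lemma frobNorm_nonneg (A : Matrix (Fin N) (Fin N) ℂ) : 0 ≤ frobNorm A :=
  Real.sqrt_nonneg _

lemma frobNorm_sq (A : Matrix (Fin N) (Fin N) ℂ) : frobNorm A ^ 2 = ∑ i, ∑ j, ‖A i j‖ ^ 2 :=
  Real.sq_sqrt (by positivity)

lemma mul_frobNorm_sq (c : ℝ) (A : Matrix (Fin N) (Fin N) ℂ) :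
    (c * frobNorm A) ^ 2 = ∑ i, ∑ j, (c * ‖A i j‖) ^ 2 := by
  simp only [mul_pow, frobNorm_sq, Finset.mul_sum]

lemma frobNorm_le_frobNorm {A B : Matrix (Fin N) (Fin N) ℂ} (h : ∀ i j, ‖A i j‖ ≤ ‖B i j‖) :
    frobNorm A ≤ frobNorm B := by
  unfold frobNorm
  gcongr with i _ j _
  exact h i j

lemma frobNorm_conjStarAlgAut (u : unitaryGroup (Fin N) ℂ) (A : Matrix (Fin N) (Fin N) ℂ) :
    frobNorm (Unitary.conjStarAlgAut ℂ _ u A) = frobNorm A := by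
  let φ := Unitary.conjStarAlgAut ℂ (Matrix (Fin N) (Fin N) ℂ) u
  have trace_conj (B : Matrix (Fin N) (Fin N) ℂ) : (φ B).trace = B.trace := by
    rw [Unitary.conjStarAlgAut_apply, trace_mul_comm, ← mul_assoc, Unitary.coe_star_mul_self,
      one_mul]
  have trace_eq : (φ A * (φ A)ᴴ).trace = (A * Aᴴ).trace := by
    rw [← star_eq_conjTranspose, ← map_star, ← map_mul, trace_conj, star_eq_conjTranspose]
  rw [← ofReal_sum_norm_sq_eq_trace, ← ofReal_sum_norm_sq_eq_trace] at trace_eq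
  exact congrArg Real.sqrt (Complex.ofReal_injective trace_eq)

lemma frobNorm_commutator_conjStarAlgAut (u : unitaryGroup (Fin N) ℂ)
    (A B : Matrix (Fin N) (Fin N) ℂ) :
    frobNorm (Unitary.conjStarAlgAut ℂ _ u A * Unitary.conjStarAlgAut ℂ _ u B -
      Unitary.conjStarAlgAut ℂ _ u B * Unitary.conjStarAlgAut ℂ _ u A) =
      frobNorm (A * B - B * A) := by
  rw [← map_mul, ← map_mul, ← map_sub, frobNorm_conjStarAlgAut]

lemma isLeast_frobNorm_sub_diagonal (G : Matrix (Fin N) (Fin N) ℂ) :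
    IsLeast ((fun P => frobNorm (G - P)) '' Set.range diagonal)
      (frobNorm (G - diagonal G.diag)) := by
  refine ⟨⟨_, ⟨_, rfl⟩, rfl⟩, ?_⟩
  rintro _ ⟨_, ⟨v, rfl⟩, rfl⟩
  refine frobNorm_le_frobNorm fun i j => ?_
  obtain rfl | hij := eq_or_ne i j
  · simp
  · simp [hij]

end FrobeniusNorm

section PolynomialFilters

variable {M N d : ℕ}

lemma map_polyFilter (φ : Matrix (Fin M) (Fin M) ℂ →ₐ[ℂ] Matrix (Fin N) (Fin N) ℂ)
    (S : Fin d → Matrix (Fin M) (Fin M) ℂ) (h : MvPolynomial (Fin d) ℂ) :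
    φ (polyFilter S h) = polyFilter (fun k => φ (S k)) h := by
  simp [polyFilter, map_list_prod, List.map_ofFn, Function.comp_def]

lemma polyFilter_diagonal (D : Fin d → Fin N → ℂ) (h : MvPolynomial (Fin d) ℂ) :
    polyFilter (fun k => diagonal (D k)) h =
      diagonal fun i => MvPolynomial.eval (fun k => D k i) h := by
  have monomial_diagonal (m : Fin d →₀ ℕ) :
      (List.ofFn fun k => diagonal (D k) ^ m k).prod = diagonal (∏ k, D k ^ m k) := by
    rw [← List.prod_ofFn, ← diagonalRingHom_apply, map_list_prod, List.map_ofFn]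
    simp [Function.comp_def, diagonal_pow]
  ext i j
  obtain rfl | hij := eq_or_ne i j
  · simp [polyFilter, monomial_diagonal, Matrix.sum_apply, MvPolynomial.eval_eq']
  · simp [polyFilter, monomial_diagonal, Matrix.sum_apply, hij]

lemma range_polyFilter_diagonal {D : Fin d → Fin N → ℂ}
    (hD : Function.Injective fun i k => D k i) :
    Set.range (polyFilter fun k => diagonal (D k)) = Set.range diagonal := by
  refine Set.Subset.antisymm ?_ ?_
  · rintro _ ⟨h, rfl⟩
    exact ⟨_, (polyFilter_diagonal D h).symm⟩
  · rintro _ ⟨v, rfl⟩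
    obtain ⟨h, hh⟩ := exists_mvPolynomial_eval_eq hD v
    exact ⟨h, by rw [polyFilter_diagonal, funext hh]⟩

lemma image_frobNorm_sub_polyFilter_conjStarAlgAut (u : unitaryGroup (Fin N) ℂ)
    (S : Fin d → Matrix (Fin N) (Fin N) ℂ) (H : Matrix (Fin N) (Fin N) ℂ) :
    (fun P => frobNorm (Unitary.conjStarAlgAut ℂ _ u H - P)) ''
        Set.range (polyFilter fun k => Unitary.conjStarAlgAut ℂ _ u (S k)) =
      (fun P => frobNorm (H - P)) '' Set.range (polyFilter S) := by
  rw [← Set.range_comp, ← Set.range_comp]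
  congr 1
  funext h
  have map_filter : Unitary.conjStarAlgAut ℂ _ u (polyFilter S h) =
      polyFilter (fun k => Unitary.conjStarAlgAut ℂ _ u (S k)) h :=
    map_polyFilter (Unitary.conjStarAlgAut ℂ _ u : _ ≃⋆ₐ[ℂ] _).toAlgEquiv.toAlgHom S h
  rw [Function.comp_apply, Function.comp_apply, ← map_filter, ← map_sub, frobNorm_conjStarAlgAut]

lemma sInf_frobNorm_sub_polyFilter (u : unitaryGroup (Fin N) ℂ)
    {S : Fin d → Matrix (Fin N) (Fin N) ℂ} {D : Fin d → Fin N → ℂ}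
    (hS : ∀ k, Unitary.conjStarAlgAut ℂ _ u (S k) = diagonal (D k))
    (hD : Function.Injective fun i k => D k i) (H : Matrix (Fin N) (Fin N) ℂ) :
    sInf ((fun P => frobNorm (H - P)) '' Set.range (polyFilter S)) =
      frobNorm (Unitary.conjStarAlgAut ℂ _ u H -
        diagonal (Unitary.conjStarAlgAut ℂ _ u H).diag) := by
  rw [← image_frobNorm_sub_polyFilter_conjStarAlgAut u, funext hS, range_polyFilter_diagonal hD]
  exact (isLeast_frobNorm_sub_diagonal _).csInf_eq

end PolynomialFilters

section Commutators

/-- The joint spectrum point `λ_i = (D₁(i), …, D_d(i))` of a family of diagonal matrices, given by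
their diagonals. It is a point of Euclidean space, so that `dist` is the `ℓ²` distance. -/
noncomputable def jointSpectrumPoint {κ ι : Type*} (D : κ → ι → ℂ) (i : ι) : EuclideanSpace ℂ κ :=
  WithLp.toLp 2 fun k => D k i

variable {N d : ℕ}

lemma sum_frobNorm_commutator_diagonal_sq (D : Fin d → Fin N → ℂ)
    (G : Matrix (Fin N) (Fin N) ℂ) :
    ∑ k, frobNorm (G * diagonal (D k) - diagonal (D k) * G) ^ 2 =
      ∑ i, ∑ j, (dist (jointSpectrumPoint D i) (jointSpectrumPoint D j) * ‖G i j‖) ^ 2 := by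
  have commutator_apply (k : Fin d) (i j : Fin N) :
      ‖(G * diagonal (D k) - diagonal (D k) * G) i j‖ = dist (D k i) (D k j) * ‖G i j‖ := by
    rw [Matrix.sub_apply, mul_diagonal, diagonal_mul, mul_comm, ← sub_mul, norm_mul, dist_comm,
      dist_eq_norm]
  have dist_sq (i j : Fin N) : dist (jointSpectrumPoint D i) (jointSpectrumPoint D j) ^ 2 =
      ∑ k, dist (D k i) (D k j) ^ 2 := by
    rw [EuclideanSpace.dist_eq, Real.sq_sqrt (by positivity)]
    rfl
  simp only [frobNorm_sq, commutator_apply, mul_pow, dist_sq, Finset.sum_mul]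
  rw [Finset.sum_comm]
  exact Finset.sum_congr rfl fun i _ => Finset.sum_comm

lemma sqrt_sum_frobNorm_commutator_diagonal_sq_le {D : Fin d → Fin N → ℂ} {R : ℝ} (hR₀ : 0 ≤ R)
    (hR : ∀ i j, dist (jointSpectrumPoint D i) (jointSpectrumPoint D j) ≤ R)
    (G : Matrix (Fin N) (Fin N) ℂ) :
    √(∑ k, frobNorm (G * diagonal (D k) - diagonal (D k) * G) ^ 2) ≤
      R * frobNorm (G - diagonal G.diag) := by
  refine Real.sqrt_le_iff.2 ⟨mul_nonneg hR₀ (frobNorm_nonneg _), ?_⟩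
  rw [mul_frobNorm_sq, sum_frobNorm_commutator_diagonal_sq]
  gcongr ∑ i, ∑ j, ?_ ^ 2 with i _ j _
  obtain rfl | hij := eq_or_ne i j
  · simp
  · simpa [hij] using mul_le_mul_of_nonneg_right (hR i j) (norm_nonneg (G i j))

lemma mul_frobNorm_sub_diagonal_diag_le {D : Fin d → Fin N → ℂ} {r : ℝ} (hr₀ : 0 ≤ r)
    (hr : ∀ i j, i ≠ j → r ≤ dist (jointSpectrumPoint D i) (jointSpectrumPoint D j))
    (G : Matrix (Fin N) (Fin N) ℂ) :
    r * frobNorm (G - diagonal G.diag) ≤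
      √(∑ k, frobNorm (G * diagonal (D k) - diagonal (D k) * G) ^ 2) := by
  refine Real.le_sqrt_of_sq_le ?_
  rw [mul_frobNorm_sq, sum_frobNorm_commutator_diagonal_sq]
  gcongr ∑ i, ∑ j, ?_ ^ 2 with i _ j _
  obtain rfl | hij := eq_or_ne i j
  · simp
  · simpa [hij] using mul_le_mul_of_nonneg_right (hr i j hij) (norm_nonneg (G i j))

end Commutators

/-- for nonzero commuting shifts `S₁,…,S_d` simultaneously diagonalized by a
unitary `U` with pairwise distinct joint spectrum points, there are constants `C₀, C₁ > 0` such
that for every matrix `H`,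
`C₀ (∑ₖ ‖[H,Sₖ]‖_F²)^{1/2} ≤ dist_F(H, 𝒫) ≤ C₁ (∑ₖ ‖[H,Sₖ]‖_F²)^{1/2}`,
where `𝒫` is the set of polynomial graph filters of `S₁,…,S_d`. -/
theorem distance_to_polynomial_filters_bounds {N d : ℕ}
    (S : Fin d → Matrix (Fin N) (Fin N) ℂ)
    (hS0 : ∀ k : Fin d, S k ≠ 0)
    (hcomm : ∀ k k' : Fin d, Commute (S k) (S k'))
    (U : Matrix (Fin N) (Fin N) ℂ) (hU : U ∈ Matrix.unitaryGroup (Fin N) ℂ)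
    (D : Fin d → Fin N → ℂ)
    (hdiag : ∀ k : Fin d, U * S k * Uᴴ = Matrix.diagonal (D k))
    (hdist : Function.Injective fun i : Fin N => fun k : Fin d => D k i) :
    ∃ C₀ : ℝ, 0 < C₀ ∧ ∃ C₁ : ℝ, 0 < C₁ ∧
      ∀ H : Matrix (Fin N) (Fin N) ℂ,
        C₀ * Real.sqrt (∑ k : Fin d, frobNorm (H * S k - S k * H) ^ 2) ≤
          sInf ((fun P => frobNorm (H - P)) '' Set.range (polyFilter S)) ∧
        sInf ((fun P => frobNorm (H - P)) '' Set.range (polyFilter S)) ≤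
          C₁ * Real.sqrt (∑ k : Fin d, frobNorm (H * S k - S k * H) ^ 2) := by
  let u : unitaryGroup (Fin N) ℂ := ⟨U, hU⟩
  have hS : ∀ k, Unitary.conjStarAlgAut ℂ _ u (S k) = diagonal (D k) := hdiag
  have points_injective : Function.Injective (jointSpectrumPoint D) :=
    (WithLp.toLp_injective 2).comp hdist
  obtain ⟨R, hR₀, hR⟩ := exists_pos_forall_dist_le (jointSpectrumPoint D)
  obtain ⟨r, hr₀, hr⟩ := exists_pos_forall_ne_le_dist points_injective
  refine ⟨R⁻¹, inv_pos.2 hR₀, r⁻¹, inv_pos.2 hr₀, fun H => ?_⟩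
  simp only [sInf_frobNorm_sub_polyFilter u hS hdist, ← frobNorm_commutator_conjStarAlgAut u H, hS]
  exact ⟨(inv_mul_le_iff₀ hR₀).2 (sqrt_sum_frobNorm_commutator_diagonal_sq_le hR₀.le hR _),
    (le_inv_mul_iff₀ hr₀).2 (mul_frobNorm_sub_diagonal_diag_le hr₀.le hr _)⟩
end

section
/- Let S₁,…,S_d be N×N complex matrices that are simultaneously diagonalized by a unitary matrix U, say U S_k Uᴴ = D_k with D_k diagonal, and suppose that the separation δ := min_{i ≠ j} (∑_{k=1}^{d} |D_k(j,j) − D_k(i,i)|²)^{1/2} is positive. Then for every N×N complex matrix H, inf over diagonal matrices D of ‖H − Uᴴ D U‖_F ≤ δ⁻¹ (∑_{k=1}^{d} ‖H S_k − S_k H‖_F²)^{1/2}, where ‖·‖_F is the Frobenius norm. -/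
open Matrix

/-!
Conjugation by `U` preserves the Frobenius norm and carries `[H, Sₖ]` to `[M, Dₖ]`, where
`M = U H Uᴴ`. The `(i, j)` entry of `[M, Dₖ]` is `M i j * (Dₖ j - Dₖ i)`, so summing squares over
`k` weights each off-diagonal `|M i j|²` by at least `δ²`. What is left of `M` off the diagonal is
the error of approximating `H` by `Uᴴ D U` with `D` the diagonal of `M`.
-/

section FrobeniusNorm

open scoped Matrix.Norms.Frobenius

variable {𝕜 α l m n ι : Type*} [Fintype l] [Fintype m] [Fintype n] [Fintype ι]

theorem frobenius_norm_sq_eq_sum [SeminormedAddCommGroup α] (A : Matrix m n α) :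
    ‖A‖ ^ 2 = ∑ i, ∑ j, ‖A i j‖ ^ 2 := by
  have sum_nonneg : 0 ≤ ∑ i, ∑ j, ‖A i j‖ ^ 2 := by positivity
  simp only [frobenius_norm_def, Real.rpow_ofNat, ← Real.sqrt_eq_rpow, Real.sq_sqrt sum_nonneg]

section UnitaryInvariance

variable [RCLike 𝕜]

theorem frobenius_norm_sq_eq_trace (A : Matrix m n 𝕜) :
    ((‖A‖ ^ 2 : ℝ) : 𝕜) = (Aᴴ * A).trace := by
  rw [frobenius_norm_sq_eq_sum, Finset.sum_comm]
  simp [trace, mul_apply, RCLike.conj_mul]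

theorem frobenius_norm_mul_of_conjTranspose_mul_self [DecidableEq m] {V : Matrix l m 𝕜}
    (hV : Vᴴ * V = 1) (A : Matrix m n 𝕜) : ‖V * A‖ = ‖A‖ := by
  have gram_eq : (V * A)ᴴ * (V * A) = Aᴴ * A := by
    rw [conjTranspose_mul, Matrix.mul_assoc, ← Matrix.mul_assoc Vᴴ, hV, Matrix.one_mul]
  have sq_eq : ‖V * A‖ ^ 2 = ‖A‖ ^ 2 := by
    rw [← RCLike.ofReal_inj (K := 𝕜), frobenius_norm_sq_eq_trace, gram_eq,
      frobenius_norm_sq_eq_trace]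
  exact (sq_eq_sq₀ (norm_nonneg _) (norm_nonneg _)).mp sq_eq

theorem frobenius_norm_mul_conjTranspose_of_conjTranspose_mul_self [DecidableEq m]
    {V : Matrix l m 𝕜} (hV : Vᴴ * V = 1) (A : Matrix n m 𝕜) : ‖A * Vᴴ‖ = ‖A‖ := by
  rw [← frobenius_norm_conjTranspose, conjTranspose_mul, conjTranspose_conjTranspose,
    frobenius_norm_mul_of_conjTranspose_mul_self hV, frobenius_norm_conjTranspose]

theorem frobenius_norm_conjStarAlgAut [DecidableEq n] (U : unitaryGroup n 𝕜) (A : Matrix n n 𝕜) :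
    ‖Unitary.conjStarAlgAut 𝕜 _ U A‖ = ‖A‖ := by
  have hU : (U : Matrix n n 𝕜)ᴴ * U = 1 := UnitaryGroup.star_mul_self U
  rw [Unitary.conjStarAlgAut_apply, star_eq_conjTranspose,
    frobenius_norm_mul_conjTranspose_of_conjTranspose_mul_self hU,
    frobenius_norm_mul_of_conjTranspose_mul_self hU]

end UnitaryInvariance

section Diagonal

variable [DecidableEq n]

theorem frobenius_norm_sub_diagonal_diag_sq [SeminormedAddCommGroup α] (M : Matrix n n α) :
    ‖M - diagonal M.diag‖ ^ 2 = ∑ i, ∑ j, if i = j then 0 else ‖M i j‖ ^ 2 := by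
  rw [frobenius_norm_sq_eq_sum]
  refine Finset.sum_congr rfl fun i _ => Finset.sum_congr rfl fun j _ => ?_
  split_ifs with hij
  · simp [hij]
  · simp [hij]

theorem frobenius_norm_commutator_diagonal_sq [SeminormedCommRing α] [NormMulClass α]
    (M : Matrix n n α) (v : n → α) :
    ‖M * diagonal v - diagonal v * M‖ ^ 2 = ∑ i, ∑ j, ‖v j - v i‖ ^ 2 * ‖M i j‖ ^ 2 := by
  have entry_eq (i j : n) : (M * diagonal v - diagonal v * M) i j = (v j - v i) * M i j := by
    rw [Matrix.sub_apply, mul_diagonal, diagonal_mul]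
    ring
  simp only [frobenius_norm_sq_eq_sum, entry_eq, norm_mul, mul_pow]

theorem sq_mul_frobenius_norm_sub_diagonal_diag_sq_le [SeminormedCommRing α] [NormMulClass α]
    (M : Matrix n n α) {v : ι → n → α} {δ : ℝ}
    (hδ : ∀ i j, i ≠ j → δ ^ 2 ≤ ∑ k, ‖v k j - v k i‖ ^ 2) :
    δ ^ 2 * ‖M - diagonal M.diag‖ ^ 2 ≤ ∑ k, ‖M * diagonal (v k) - diagonal (v k) * M‖ ^ 2 := by
  calc δ ^ 2 * ‖M - diagonal M.diag‖ ^ 2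
      = ∑ i, ∑ j, δ ^ 2 * if i = j then 0 else ‖M i j‖ ^ 2 := by
        simp only [frobenius_norm_sub_diagonal_diag_sq, Finset.mul_sum]
    _ ≤ ∑ i, ∑ j, ∑ k, ‖v k j - v k i‖ ^ 2 * ‖M i j‖ ^ 2 := by
        gcongr with i _ j _
        rw [← Finset.sum_mul]
        split_ifs with hij
        · rw [mul_zero]
          positivity
        · gcongr
          exact hδ i j hij
    _ = ∑ k, ‖M * diagonal (v k) - diagonal (v k) * M‖ ^ 2 := by
        simp only [frobenius_norm_commutator_diagonal_sq]
        exact Finset.sum_comm_cycle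

end Diagonal

theorem diagonal_approximation_bound_general [RCLike 𝕜] [DecidableEq n]
    (S : ι → Matrix n n 𝕜) (U : Matrix n n 𝕜) (hU : U ∈ unitaryGroup n 𝕜) (D : ι → n → 𝕜)
    (hdiag : ∀ k, U * S k * Uᴴ = diagonal (D k)) {δ : ℝ} (hδpos : 0 < δ)
    (hsep : ∀ i j, i ≠ j → δ ≤ √(∑ k, ‖D k j - D k i‖ ^ 2)) (H : Matrix n n 𝕜) :
    ⨅ v : n → 𝕜, ‖H - Uᴴ * diagonal v * U‖ ≤ δ⁻¹ * √(∑ k, ‖H * S k - S k * H‖ ^ 2) := by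
  let φ := Unitary.conjStarAlgAut 𝕜 (Matrix n n 𝕜) ⟨U, hU⟩
  have norm_φ (A : Matrix n n 𝕜) : ‖φ A‖ = ‖A‖ := frobenius_norm_conjStarAlgAut _ A
  have φ_S (k : ι) : φ (S k) = diagonal (D k) := hdiag k
  have φ_conj (v : n → 𝕜) : φ (Uᴴ * diagonal v * U) = diagonal v := φ.apply_symm_apply _
  have error_eq : ‖H - Uᴴ * diagonal (φ H).diag * U‖ = ‖φ H - diagonal (φ H).diag‖ := by
    rw [← norm_φ, map_sub, φ_conj]
  have commutator_eq (k : ι) : ‖H * S k - S k * H‖ =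
      ‖φ H * diagonal (D k) - diagonal (D k) * φ H‖ := by
    rw [← norm_φ, map_sub, map_mul, map_mul, φ_S]
  have sq_sep (i j : n) (hij : i ≠ j) : δ ^ 2 ≤ ∑ k, ‖D k j - D k i‖ ^ 2 :=
    (Real.le_sqrt' hδpos).mp (hsep i j hij)
  calc ⨅ v : n → 𝕜, ‖H - Uᴴ * diagonal v * U‖
      ≤ ‖H - Uᴴ * diagonal (φ H).diag * U‖ :=
        ciInf_le ⟨0, Set.forall_mem_range.mpr fun _ => norm_nonneg _⟩ _
    _ ≤ δ⁻¹ * √(∑ k, ‖H * S k - S k * H‖ ^ 2) := by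
        rw [le_inv_mul_iff₀ hδpos]
        refine Real.le_sqrt_of_sq_le ?_
        simp only [mul_pow, error_eq, commutator_eq]
        exact sq_mul_frobenius_norm_sub_diagonal_diag_sq_le (φ H) sq_sep

theorem frobNorm_eq_frobenius_norm {N : ℕ} (A : Matrix (Fin N) (Fin N) ℂ) : frobNorm A = ‖A‖ := by
  rw [frobNorm, ← frobenius_norm_sq_eq_sum, Real.sqrt_sq (norm_nonneg A)]

end FrobeniusNorm

/-- if `U` simultaneously diagonalizes `S₁,…,S_d` (with `U Sₖ Uᴴ = diag (D k)`)
and the separation `δ = min_{i ≠ j} (∑ₖ |Dₖ(j,j) − Dₖ(i,i)|²)^{1/2}` is positive, then for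
every matrix `H`,
`inf_D ‖H − Uᴴ D U‖_F ≤ δ⁻¹ (∑ₖ ‖H Sₖ − Sₖ H‖_F²)^{1/2}`,
where the infimum is over all diagonal matrices `D`. -/
theorem diagonal_approximation_bound {N d : ℕ}
    (S : Fin d → Matrix (Fin N) (Fin N) ℂ)
    (U : Matrix (Fin N) (Fin N) ℂ) (hU : U ∈ Matrix.unitaryGroup (Fin N) ℂ)
    (D : Fin d → Fin N → ℂ)
    (hdiag : ∀ k : Fin d, U * S k * Uᴴ = Matrix.diagonal (D k))
    (δ : ℝ)
    (hδdef : δ = sInf ((fun p : Fin N × Fin N =>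
      Real.sqrt (∑ k : Fin d, ‖D k p.2 - D k p.1‖ ^ 2)) ''
        {p : Fin N × Fin N | p.1 ≠ p.2}))
    (hδpos : 0 < δ) :
    ∀ H : Matrix (Fin N) (Fin N) ℂ,
      sInf (Set.range fun Dm : Fin N → ℂ => frobNorm (H - Uᴴ * Matrix.diagonal Dm * U)) ≤
        δ⁻¹ * Real.sqrt (∑ k : Fin d, frobNorm (H * S k - S k * H) ^ 2) := by
  have hsep (i j : Fin N) (hij : i ≠ j) : δ ≤ √(∑ k, ‖D k j - D k i‖ ^ 2) :=
    hδdef.trans_le (csInf_le (Set.toFinite _).bddBelow ⟨(i, j), hij, rfl⟩)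
  simpa only [frobNorm_eq_frobenius_norm, sInf_range] using
    diagonal_approximation_bound_general S U hU D hdiag hδpos hsep
end
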